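/- arXiv:1902.06763 — 2 statements merged into one kernel-verified Lean document; each statement's English description precedes it below -/
import Mathlib

section
/- Let $n\ge 2$, let $\alpha=(\alpha_1,\dots,\alpha_n)$ be real numbers with $\alpha_i>0$ for all $i$ and $\alpha_i<\alpha_1+\cdots+\alpha_{i-1}$ for every $2\le i\le n$, and let $s=(s_1,\dots,s_n)\in\mathbb{C}^n$ satisfy $\Re(s_j+\cdots+s_n)>n-j+1$ for every $1\le j\le n$. Then the integral $$Y_n(\alpha;s)=\int_{\prod_{i=1}^n[\alpha_i,\infty)}\ \prod_{i=1}^n (y_1+\cdots+y_i)^{-s_i}\,dy=\int_{[0,\infty)^n}\ \prod_{i=1}^n (x_1+\cdots+x_i+\alpha_1+\cdots+\alpha_i)^{-s_i}\,dx$$ converges absolutely. For $k=(k_2,\dots,k_n)\in\mathbb{N}^{n-1}$, where $\mathbb{N}=\{0,1,2,\dots\}$, put $$F(k)=\frac{\prod_{j=2}^n\binom{-\sum_{i=j}^n s_i+(n-j+1)-\sum_{i=j+1}^n k_i}{k_j}\;\alpha_1^{-\sum_{i=1}^n s_i+n-\sum_{i=2}^n k_i}\;\prod_{j=2}^n\alpha_j^{k_j}}{\prod_{j=1}^n\left(\sum_{i=j}^n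 s_i-(n-j+1)+\sum_{i=j+1}^n k_i\right)},$$ where $\binom{z}{k}=z(z-1)\cdots(z-k+1)/k!$, complex powers of positive reals are principal, and empty sums are $0$. Then $$Y_n(\alpha;s)=\sum_{k_n\in\mathbb{N}}\ \sum_{k_{n-1}\in\mathbb{N}}\cdots\sum_{k_2\in\mathbb{N}}F(k_2,\dots,k_n),$$ as an iterated series ($k_2$ innermost, $k_n$ outermost) in which each of the successive single series converges absolutely. If moreover $\alpha_2+\cdots+\alpha_n<\alpha_1$ (for $n=2$ this is already assumed), then the multiple series $\sum_{k\in\mathbb{N}^{n-1}}F(k)$ converges absolutely, with sum $Y_n(\alpha;s)$. -/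
noncomputable section

namespace HurwitzIntegral

/-- The integrand `∏ i, (y_1 + ⋯ + y_i)^(-s_i)`, with `n = m + 1` variables. -/
def integrand {m : ℕ} (s : Fin (m + 1) → ℂ) (y : Fin (m + 1) → ℝ) : ℂ :=
  ∏ i, (((∑ j ∈ Finset.Iic i, y j : ℝ) : ℂ)) ^ (-(s i))

/-- The domain of integration `∏ i, [α_i, ∞)`. -/
def domain {m : ℕ} (α : Fin (m + 1) → ℝ) : Set (Fin (m + 1) → ℝ) :=
  Set.univ.pi fun i => Set.Ici (α i)

/-- The integral function `Y_n(α; s) = ∫_{∏ [α_i, ∞)} ∏ i, (y_1 + ⋯ + y_i)^(-s_i) dy`. -/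
def Y {m : ℕ} (α : Fin (m + 1) → ℝ) (s : Fin (m + 1) → ℂ) : ℂ :=
  ∫ y in domain α, integrand s y

/-- `∑_{i ≥ j} s_i - (n - j + 1) + ∑_{i ≥ j + 1} k_i` for `1 ≤ j ≤ n`. Indices are shifted:
`j : Fin (m + 1)` stands for the `(j + 1)`-st variable out of `n = m + 1`, and
`k = (k_2, …, k_n)` is indexed by `Fin m`, with `k i` standing for `k_{i + 2}`. -/
def tailExp {m : ℕ} (s : Fin (m + 1) → ℂ) (k : Fin m → ℕ) (j : Fin (m + 1)) : ℂ :=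
  (∑ i ∈ Finset.Ici j, s i) - ((m : ℂ) + 1 - ((j : ℕ) : ℂ))
    + ∑ i ∈ Finset.univ.filter (fun i : Fin m => (j : ℕ) ≤ (i : ℕ)), (k i : ℂ)

/-- The term of the multiple series at `k = (k_2, …, k_n)`; `j.succ` for `j : Fin m` runs through
the variables number `2, …, n`. -/
def term {m : ℕ} (α : Fin (m + 1) → ℝ) (s : Fin (m + 1) → ℂ) (k : Fin m → ℕ) : ℂ :=
  (∏ j : Fin m, Ring.choose (-(tailExp s k j.succ)) (k j))
    * (α 0 : ℂ) ^ (-(tailExp s k 0))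
    * (∏ j : Fin m, (α j.succ : ℂ) ^ (k j))
    / ∏ j : Fin (m + 1), tailExp s k j

/-- `S` is the iterated sum `∑_{k_m} (⋯ (∑_{k_1} F(k_1, …, k_m)))`, the first index innermost and
the last index outermost, each of the single series being absolutely convergent. -/
def IteratedHasSum : (m : ℕ) → ((Fin m → ℕ) → ℂ) → ℂ → Prop
  | 0, F, S => F Fin.elim0 = S
  | m + 1, F, S => ∃ g : ℕ → ℂ,
      (∀ l : ℕ, IteratedHasSum m (fun k => F (Fin.snoc (α := fun _ => ℕ) k l)) (g l)) ∧
        HasSum g S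

end HurwitzIntegral

end

noncomputable section

namespace HurwitzIntegral

open MeasureTheory

section FinSums

variable {M : Type*} [AddCommMonoid M] {n : ℕ}

lemma sum_Iic_castSucc (f : Fin (n + 1) → M) (i : Fin n) :
    ∑ j ∈ Finset.Iic i.castSucc, f j = ∑ j ∈ Finset.Iic i, f j.castSucc := by
  have h : Finset.Iic i.castSucc = (Finset.Iic i).map Fin.castSuccEmb := by
    ext j
    induction j using Fin.lastCases <;> simp
  rw [h, Finset.sum_map]
  rfl

lemma sum_Iic_last (f : Fin (n + 1) → M) :
    ∑ j ∈ Finset.Iic (Fin.last n), f j = ∑ j : Fin n, f j.castSucc + f (Fin.last n) := by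
  rw [← Fin.sum_univ_castSucc]
  congr 1
  ext j
  simp [Fin.le_last]

lemma sum_Iio_castSucc (f : Fin (n + 1) → M) (i : Fin n) :
    ∑ j ∈ Finset.Iio i.castSucc, f j = ∑ j ∈ Finset.Iio i, f j.castSucc := by
  have h : Finset.Iio i.castSucc = (Finset.Iio i).map Fin.castSuccEmb := by
    ext j
    induction j using Fin.lastCases <;> simp
  rw [h, Finset.sum_map]
  rfl

lemma sum_Iio_last (f : Fin (n + 1) → M) :
    ∑ j ∈ Finset.Iio (Fin.last n), f j = ∑ j : Fin n, f j.castSucc := by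
  have h : Finset.Iio (Fin.last n) = Finset.univ.map Fin.castSuccEmb := by
    ext j
    induction j using Fin.lastCases <;> simp
  rw [h, Finset.sum_map]
  rfl

lemma sum_Ici_castSucc (f : Fin (n + 1) → M) (i : Fin n) :
    ∑ j ∈ Finset.Ici i.castSucc, f j = ∑ j ∈ Finset.Ici i, f j.castSucc + f (Fin.last n) := by
  have h (k : Fin (n + 1)) : Finset.Ici k = Finset.univ.filter (k ≤ ·) := by ext; simp
  have h' (k : Fin n) : Finset.Ici k = Finset.univ.filter (k ≤ ·) := by ext; simp
  rw [h, h', Finset.sum_filter, Finset.sum_filter, Fin.sum_univ_castSucc]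
  simp [Fin.le_last]

lemma sum_Ici_last (f : Fin (n + 1) → M) :
    ∑ j ∈ Finset.Ici (Fin.last n), f j = f (Fin.last n) := by
  have h : Finset.Ici (Fin.last n) = {Fin.last n} := by
    ext j
    simp [Fin.last_le_iff]
  simp [h]

end FinSums

variable {m : ℕ}

/-- The exponents obtained from `s` by integrating out the last variable and taking the term of
index `c` of the binomial series: the last exponent `s_n` is merged into the previous one, which
becomes `s_{n - 1} + s_n - 1 + c`. -/
def mergeLast (s : Fin (m + 2) → ℂ) (c : ℂ) (i : Fin (m + 1)) : ℂ :=
  s i.castSucc + if i = Fin.last m then s (Fin.last (m + 1)) - 1 + c else 0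

lemma sum_Ici_mergeLast (s : Fin (m + 2) → ℂ) (c : ℂ) (j : Fin (m + 1)) :
    ∑ i ∈ Finset.Ici j, mergeLast s c i = ∑ i ∈ Finset.Ici j.castSucc, s i - 1 + c := by
  rw [sum_Ici_castSucc]
  simp only [mergeLast, Finset.sum_add_distrib, Finset.sum_ite_eq', Finset.mem_Ici, Fin.le_last,
    if_true]
  ring

lemma re_sum_Ici_mergeLast {s : Fin (m + 2) → ℂ}
    (hs : ∀ j : Fin (m + 2), ((m + 1 : ℕ) : ℝ) + 1 - ((j : ℕ) : ℝ) < (∑ i ∈ Finset.Ici j, s i).re)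
    {c : ℂ} (hc : 0 ≤ c.re) (j : Fin (m + 1)) :
    (m : ℝ) + 1 - ((j : ℕ) : ℝ) < (∑ i ∈ Finset.Ici j, mergeLast s c i).re := by
  have := hs j.castSucc
  rw [sum_Ici_mergeLast]
  simp only [Complex.add_re, Complex.sub_re, Complex.one_re, Fin.val_castSucc] at this ⊢
  push_cast at this
  linarith

lemma one_lt_re_last {s : Fin (m + 2) → ℂ}
    (hs : ∀ j : Fin (m + 2), ((m + 1 : ℕ) : ℝ) + 1 - ((j : ℕ) : ℝ) <
      (∑ i ∈ Finset.Ici j, s i).re) :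
    1 < (s (Fin.last (m + 1))).re := by
  have := hs (Fin.last (m + 1))
  rw [sum_Ici_last] at this
  simpa using this

lemma tailExp_snoc_castSucc (s : Fin (m + 2) → ℂ) (k : Fin m → ℕ) (l : ℕ) (j : Fin (m + 1)) :
    tailExp s (Fin.snoc (α := fun _ => ℕ) k l) j.castSucc = tailExp (mergeLast s l) k j := by
  simp only [tailExp, sum_Ici_mergeLast, Finset.sum_filter, Fin.sum_univ_castSucc,
    Fin.snoc_castSucc, Fin.snoc_last, Fin.val_castSucc, Fin.val_last]
  rw [if_pos (Nat.lt_succ_iff.mp j.isLt)]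
  push_cast
  ring

lemma tailExp_last (s : Fin (m + 2) → ℂ) (k : Fin (m + 1) → ℕ) :
    tailExp s k (Fin.last (m + 1)) = s (Fin.last (m + 1)) - 1 := by
  rw [tailExp, sum_Ici_last, Finset.filter_false_of_mem]
  · simp
  · intro i _
    simp only [Fin.val_last]
    omega

lemma term_snoc (α : Fin (m + 2) → ℝ) (s : Fin (m + 2) → ℂ) (k : Fin m → ℕ) (l : ℕ) :
    term α s (Fin.snoc (α := fun _ => ℕ) k l) =
      (Ring.choose (-(s (Fin.last (m + 1)) - 1)) l * (α (Fin.last (m + 1)) : ℂ) ^ l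
        / (s (Fin.last (m + 1)) - 1)) *
        term (fun i => α i.castSucc) (mergeLast s l) k := by
  have h0 := tailExp_snoc_castSucc s k l 0
  rw [Fin.castSucc_zero] at h0
  unfold term
  rw [Fin.prod_univ_castSucc, Fin.prod_univ_castSucc, Fin.prod_univ_castSucc (n := m + 1)]
  simp only [Fin.succ_castSucc, Fin.succ_last, Fin.snoc_castSucc, Fin.snoc_last,
    tailExp_snoc_castSucc, tailExp_last, h0, Fin.castSucc_zero]
  simp only [div_eq_mul_inv, mul_inv]
  ring

lemma integrand_snoc (s : Fin (m + 2) → ℂ) (y : Fin (m + 1) → ℝ) (t : ℝ) :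
    integrand s (Fin.snoc (α := fun _ => ℝ) y t) =
      integrand (fun i => s i.castSucc) y *
        ((∑ i, y i + t : ℝ) : ℂ) ^ (-(s (Fin.last (m + 1)))) := by
  unfold integrand
  rw [Fin.prod_univ_castSucc]
  simp only [sum_Iic_castSucc, sum_Iic_last, Fin.snoc_castSucc, Fin.snoc_last]

lemma integrand_mergeLast (s : Fin (m + 2) → ℂ) (c : ℂ) {y : Fin (m + 1) → ℝ}
    (hy : 0 < ∑ i, y i) :
    integrand (mergeLast s c) y = integrand (fun i => s i.castSucc) y *
      ((∑ i, y i : ℝ) : ℂ) ^ (-(s (Fin.last (m + 1)) - 1 + c)) := by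
  have hne : ((∑ i, y i : ℝ) : ℂ) ≠ 0 := by exact_mod_cast hy.ne'
  unfold integrand
  rw [Fin.prod_univ_castSucc, Fin.prod_univ_castSucc, mul_assoc]
  have h1 : ∑ j ∈ Finset.Iic (Fin.last m), y j = ∑ i, y i := by
    rw [sum_Iic_last, Fin.sum_univ_castSucc]
  congr 1
  · refine Finset.prod_congr rfl fun i _ => ?_
    simp [mergeLast, (Fin.castSucc_lt_last i).ne]
  · rw [h1, ← Complex.cpow_add _ _ hne]
    simp only [mergeLast, if_true]
    ring_nf

lemma sum_le_of_mem_domain {α y : Fin (m + 1) → ℝ} (hy : y ∈ domain α) :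
    ∑ i, α i ≤ ∑ i, y i :=
  Finset.sum_le_sum fun i _ => hy i (Set.mem_univ i)

lemma sum_pos_of_forall_pos {α : Fin (m + 1) → ℝ} (hα : ∀ i, 0 < α i) : 0 < ∑ i, α i :=
  Finset.sum_pos (fun i _ => hα i) Finset.univ_nonempty

lemma measurableSet_domain (α : Fin (m + 1) → ℝ) : MeasurableSet (domain α) :=
  MeasurableSet.univ_pi fun _ => measurableSet_Ici

lemma measurable_integrand (s : Fin (m + 1) → ℂ) : Measurable (integrand s) := by
  unfold integrand
  fun_prop

/-- The domain of integration splits off its last factor. -/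
lemma measurePreserving_snoc (α : Fin (m + 2) → ℝ) :
    MeasurePreserving (MeasurableEquiv.piFinSuccAbove (fun _ => ℝ) (Fin.last (m + 1))).symm
      ((volume.restrict (Set.Ici (α (Fin.last (m + 1))))).prod
        (volume.restrict (domain fun i => α i.castSucc)))
      (volume.restrict (domain α)) := by
  have h := ((volume_preserving_piFinSuccAbove (fun _ => ℝ)
    (Fin.last (m + 1))).symm).restrict_preimage (measurableSet_domain α)
  convert! h using 1
  rw [Measure.prod_restrict]
  congr 1
  ext ⟨t, y⟩
  simp only [domain, MeasurableEquiv.piFinSuccAbove, Fin.insertNthEquiv, Set.mem_prod,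
    Set.mem_Ici, Set.mem_univ_pi, Set.mem_preimage, MeasurableEquiv.symm_mk,
    MeasurableEquiv.coe_mk, Equiv.symm_symm, Equiv.coe_fn_mk, Fin.insertNth_last',
    Fin.forall_fin_succ', Fin.snoc_castSucc, Fin.snoc_last]
  exact and_comm

lemma piFinSuccAbove_last_symm_apply (p : ℝ × (Fin (m + 1) → ℝ)) :
    (MeasurableEquiv.piFinSuccAbove (fun _ => ℝ) (Fin.last (m + 1))).symm p =
      Fin.snoc (α := fun _ => ℝ) p.2 p.1 := by
  simp [MeasurableEquiv.piFinSuccAbove, Fin.insertNthEquiv, Fin.insertNth_last']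

section OneVariable

variable {S a : ℝ} {z : ℂ}

lemma integrableOn_add_cpow (h : 0 < S + a) (hz : 1 < z.re) :
    IntegrableOn (fun t : ℝ => ((S + t : ℝ) : ℂ) ^ (-z)) (Set.Ici a) := by
  rw [integrableOn_Ici_iff_integrableOn_Ioi]
  have := ((measurePreserving_add_left volume S).integrableOn_comp_preimage
    (measurableEmbedding_addLeft S)).2
    (integrableOn_Ioi_cpow_of_lt (a := -z) (by simpa using hz) h)
  simpa [Function.comp_def] using this

lemma integral_add_cpow (h : 0 < S + a) (hz : 1 < z.re) :
    ∫ t in Set.Ici a, ((S + t : ℝ) : ℂ) ^ (-z) = ((S + a : ℝ) : ℂ) ^ (-(z - 1)) / (z - 1) := by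
  rw [integral_Ici_eq_integral_Ioi]
  have := (measurePreserving_add_left volume S).setIntegral_preimage_emb
    (measurableEmbedding_addLeft S) (fun x : ℝ => (x : ℂ) ^ (-z)) (Set.Ioi (S + a))
  rw [integral_Ioi_cpow_of_lt (by simpa using hz) h] at this
  simp only [Set.preimage_const_add_Ioi, add_sub_cancel_left] at this
  rw [this, show -z + 1 = -(z - 1) by ring, neg_div_neg_eq]

lemma integral_norm_add_cpow (h : 0 < S + a) (hz : 1 < z.re) :
    ∫ t in Set.Ici a, ‖((S + t : ℝ) : ℂ) ^ (-z)‖ = (S + a) ^ (-(z.re - 1)) / (z.re - 1) := by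
  rw [integral_Ici_eq_integral_Ioi]
  have := (measurePreserving_add_left volume S).setIntegral_preimage_emb
    (measurableEmbedding_addLeft S) (fun x : ℝ => ‖(x : ℂ) ^ (-z)‖) (Set.Ioi (S + a))
  have h2 : ∫ x in Set.Ioi (S + a), ‖(x : ℂ) ^ (-z)‖ = ∫ x in Set.Ioi (S + a), x ^ (-z.re) :=
    setIntegral_congr_fun measurableSet_Ioi fun x hx => by
      simp [Complex.norm_cpow_eq_rpow_re_of_pos (h.trans hx)]
  rw [h2, integral_Ioi_rpow_of_lt (by simpa using hz) h] at this
  simp only [Set.preimage_const_add_Ioi, add_sub_cancel_left] at this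
  rw [this, show -z.re + 1 = -(z.re - 1) by ring, neg_div_neg_eq]

/-- Newton's binomial series for `(S + a)^w` with `0 < a < S`. -/
lemma hasSum_choose_mul_cpow (ha : 0 < a) (haS : a < S) (w : ℂ) :
    HasSum (fun l : ℕ => Ring.choose w l * (a : ℂ) ^ l * (S : ℂ) ^ (w - l))
      (((S + a : ℝ) : ℂ) ^ w) := by
  have hS : 0 < S := ha.trans haS
  have hne : (S : ℂ) ≠ 0 := by exact_mod_cast hS.ne'
  have hlt : ‖((a / S : ℝ) : ℂ)‖ < 1 := by
    rw [Complex.norm_real, Real.norm_of_nonneg (by positivity)]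
    exact (div_lt_one hS).2 haS
  have h := (Complex.one_add_cpow_hasFPowerSeriesOnBall_zero (a := w)).hasSum
    (y := ((a / S : ℝ) : ℂ)) (by
      rw [← ENNReal.ofReal_one, Metric.eball_ofReal]
      simpa using hlt)
  simp only [zero_add, binomialSeries_apply, List.ofFn_const, List.prod_replicate,
    smul_eq_mul] at h
  have h2 := h.mul_left ((S : ℂ) ^ w)
  convert! h2 using 1
  · funext l
    rw [Complex.cpow_sub _ _ hne, Complex.cpow_natCast]
    push_cast
    rw [div_pow]
    ring
  · rw [show S + a = S * (1 + a / S) by field_simp, Complex.ofReal_mul,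
      Complex.mul_cpow_ofReal_nonneg hS.le (by positivity)]
    push_cast
    rfl

lemma summable_norm_choose_mul_pow (w : ℂ) {r : ℝ} (h0 : 0 ≤ r) (h1 : r < 1) :
    Summable fun l : ℕ => ‖Ring.choose w l‖ * r ^ l := by
  have h := ((Complex.one_add_cpow_hasFPowerSeriesOnBall_zero (a := w)).hasSum
    (y := (r : ℂ)) (by
      rw [← ENNReal.ofReal_one, Metric.eball_ofReal]
      simpa [abs_of_nonneg h0] using h1)).summable.norm
  simp only [binomialSeries_apply, List.ofFn_const, List.prod_replicate, smul_eq_mul] at h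
  simpa [abs_of_nonneg h0] using h

end OneVariable

lemma integral_domain_fin_one (α : Fin (0 + 1) → ℝ) (f : (Fin (0 + 1) → ℝ) → ℂ) :
    ∫ y in domain α, f y = ∫ t in Set.Ici (α 0), f fun _ => t := by
  have h := ((volume_preserving_funUnique (Fin 1) ℝ).symm).setIntegral_preimage_emb
    (MeasurableEquiv.funUnique (Fin 1) ℝ).symm.measurableEmbedding f (domain α)
  refine h.symm.trans ?_
  congr 2
  ext t
  simp [domain, MeasurableEquiv.funUnique, Pi.le_def]

lemma integrableOn_domain_fin_one (α : Fin (0 + 1) → ℝ) (f : (Fin (0 + 1) → ℝ) → ℂ) :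
    IntegrableOn f (domain α) ↔ IntegrableOn (fun t : ℝ => f fun _ => t) (Set.Ici (α 0)) := by
  have h := ((volume_preserving_funUnique (Fin 1) ℝ).symm).integrableOn_comp_preimage
    (MeasurableEquiv.funUnique (Fin 1) ℝ).symm.measurableEmbedding (f := f) (s := domain α)
  refine h.symm.trans ?_
  have : (MeasurableEquiv.funUnique (Fin 1) ℝ).symm ⁻¹' domain α = Set.Ici (α 0) := by
    ext t
    simp [domain, MeasurableEquiv.funUnique, Pi.le_def]
  rw [this]
  rfl

lemma integrand_fin_one (s : Fin (0 + 1) → ℂ) (t : ℝ) :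
    integrand s (fun _ => t) = ((0 + t : ℝ) : ℂ) ^ (-(s 0)) := by
  simp [integrand]

theorem integrableOn_integrand (α : Fin (m + 1) → ℝ) (hα : ∀ i, 0 < α i) (s : Fin (m + 1) → ℂ)
    (hs : ∀ j : Fin (m + 1), (m : ℝ) + 1 - ((j : ℕ) : ℝ) < (∑ i ∈ Finset.Ici j, s i).re) :
    IntegrableOn (integrand s) (domain α) := by
  induction m with
  | zero =>
    have h0 := hs 0
    rw [show (0 : Fin (0 + 1)) = Fin.last 0 from rfl, sum_Ici_last] at h0
    simp only [integrableOn_domain_fin_one, integrand_fin_one]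
    exact integrableOn_add_cpow (by simpa using hα 0) (by simpa using h0)
  | succ m ih =>
    have hz := one_lt_re_last hs
    have hpos := sum_pos_of_forall_pos fun i : Fin (m + 1) => hα i.castSucc
    have hint := ih (fun i => α i.castSucc) (fun i => hα _) (mergeLast s 0)
      (re_sum_Ici_mergeLast hs le_rfl)
    have hlast := hα (Fin.last (m + 1))
    rw [IntegrableOn, ← (measurePreserving_snoc α).integrable_comp_emb
      (MeasurableEquiv.measurableEmbedding _)]
    have hmeas : Measurable (integrand s ∘
        (MeasurableEquiv.piFinSuccAbove (fun _ => ℝ) (Fin.last (m + 1))).symm) :=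
      (measurable_integrand s).comp (MeasurableEquiv.measurable _)
    rw [integrable_prod_iff' hmeas.aestronglyMeasurable]
    simp only [Function.comp_apply, piFinSuccAbove_last_symm_apply, integrand_snoc, norm_mul,
      integral_const_mul]
    have hmem := ae_restrict_mem (μ := volume) (measurableSet_domain fun i => α i.castSucc)
    refine ⟨?_, ?_⟩
    · filter_upwards [hmem] with y hy
      have := sum_le_of_mem_domain hy
      exact (integrableOn_add_cpow (by linarith) hz).const_mul _
    · have hmeas' : AEStronglyMeasurable (fun y : Fin (m + 1) → ℝ =>
          ‖integrand (fun i => s i.castSucc) y‖ *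
            ((∑ i, y i + α (Fin.last (m + 1))) ^ (-((s (Fin.last (m + 1))).re - 1)) /
              ((s (Fin.last (m + 1))).re - 1)))
          (volume.restrict (domain fun i => α i.castSucc)) := by
        have := measurable_integrand fun i : Fin (m + 1) => s i.castSucc
        exact Measurable.aestronglyMeasurable (by fun_prop)
      have hae : (fun y : Fin (m + 1) → ℝ => ‖integrand (fun i => s i.castSucc) y‖ *
            ∫ t in Set.Ici (α (Fin.last (m + 1))),
              ‖((∑ i, y i + t : ℝ) : ℂ) ^ (-(s (Fin.last (m + 1))))‖)
          =ᵐ[volume.restrict (domain fun i => α i.castSucc)] fun y =>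
          ‖integrand (fun i => s i.castSucc) y‖ *
            ((∑ i, y i + α (Fin.last (m + 1))) ^ (-((s (Fin.last (m + 1))).re - 1)) /
              ((s (Fin.last (m + 1))).re - 1)) := by
        filter_upwards [hmem] with y hy
        have := sum_le_of_mem_domain hy
        rw [integral_norm_add_cpow (by linarith) hz]
      rw [integrable_congr hae]
      refine (hint.norm.div_const ((s (Fin.last (m + 1))).re - 1)).mono' hmeas' ?_
      filter_upwards [hmem] with y hy
      have hy' := sum_le_of_mem_domain hy
      have hS : 0 < ∑ i, y i := by linarith
      have hnn : 0 ≤ ‖integrand (fun i => s i.castSucc) y‖ *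
          ((∑ i, y i + α (Fin.last (m + 1))) ^ (-((s (Fin.last (m + 1))).re - 1)) /
            ((s (Fin.last (m + 1))).re - 1)) := by
        have := sub_pos.2 hz
        positivity
      rw [Real.norm_of_nonneg hnn, integrand_mergeLast s 0 hS, norm_mul,
        Complex.norm_cpow_eq_rpow_re_of_pos hS, mul_div_assoc]
      have : (-(s (Fin.last (m + 1)) - 1 + 0)).re = -((s (Fin.last (m + 1))).re - 1) := by simp
      rw [this]
      gcongr ?_ * (?_ / ?_)
      exact Real.rpow_le_rpow_of_nonpos hS (by linarith) (by linarith)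

theorem Y_eq_integral (α : Fin (m + 2) → ℝ) (hα : ∀ i, 0 < α i) (s : Fin (m + 2) → ℂ)
    (hs : ∀ j : Fin (m + 2), ((m + 1 : ℕ) : ℝ) + 1 - ((j : ℕ) : ℝ) <
      (∑ i ∈ Finset.Ici j, s i).re) :
    Y α s = ∫ y in domain fun i => α i.castSucc, integrand (fun i => s i.castSucc) y *
      (((∑ i, y i + α (Fin.last (m + 1)) : ℝ) : ℂ) ^ (-(s (Fin.last (m + 1)) - 1)) /
        (s (Fin.last (m + 1)) - 1)) := by
  have hpos := sum_pos_of_forall_pos fun i : Fin (m + 1) => hα i.castSucc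
  have hlast := hα (Fin.last (m + 1))
  have hint := ((measurePreserving_snoc α).integrable_comp_emb
      (MeasurableEquiv.measurableEmbedding _)).2 (integrableOn_integrand α hα s hs)
  rw [Y, ← (measurePreserving_snoc α).integral_comp']
  refine (integral_prod_symm _ hint).trans ?_
  refine setIntegral_congr_fun (measurableSet_domain _) fun y hy => ?_
  have := sum_le_of_mem_domain hy
  simp only [Function.comp_apply, piFinSuccAbove_last_symm_apply, integrand_snoc,
    integral_const_mul]
  rw [integral_add_cpow (by linarith) (one_lt_re_last hs)]

theorem hasSum_Y_mergeLast (α : Fin (m + 2) → ℝ) (hα : ∀ i, 0 < α i)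
    (hlt : α (Fin.last (m + 1)) < ∑ i : Fin (m + 1), α i.castSucc) (s : Fin (m + 2) → ℂ)
    (hs : ∀ j : Fin (m + 2), ((m + 1 : ℕ) : ℝ) + 1 - ((j : ℕ) : ℝ) <
      (∑ i ∈ Finset.Ici j, s i).re) :
    HasSum (fun l : ℕ => (Ring.choose (-(s (Fin.last (m + 1)) - 1)) l *
        (α (Fin.last (m + 1)) : ℂ) ^ l / (s (Fin.last (m + 1)) - 1)) *
        Y (fun i => α i.castSucc) (mergeLast s l)) (Y α s) := by
  set a := α (Fin.last (m + 1)) with ha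
  set z := s (Fin.last (m + 1)) with hz
  set A := ∑ i : Fin (m + 1), α i.castSucc with hA
  have ha0 : 0 < a := hα _
  have hA0 : 0 < A := ha0.trans hlt
  have hmem := ae_restrict_mem (μ := volume) (measurableSet_domain fun i => α i.castSucc)
  have hint (l : ℕ) := integrableOn_integrand (fun i => α i.castSucc) (fun i => hα _)
    (mergeLast s l) (re_sum_Ici_mergeLast hs (by simp))
  rw [Y_eq_integral α hα s hs]
  simp only [Y, ← integral_const_mul]
  have hbound (l : ℕ) : ∀ᵐ y ∂(volume.restrict (domain fun i : Fin (m + 1) => α i.castSucc)),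
      ‖Ring.choose (-(z - 1)) l * (a : ℂ) ^ l / (z - 1) * integrand (mergeLast s l) y‖ ≤
        ‖Ring.choose (-(z - 1)) l‖ * (a / A) ^ l / ‖z - 1‖ *
          ‖integrand (mergeLast s (0 : ℕ)) y‖ := by
    filter_upwards [hmem] with y hy
    have hy' := sum_le_of_mem_domain hy
    have hS : 0 < ∑ i, y i := by linarith
    have hne : ((∑ i, y i : ℝ) : ℂ) ≠ 0 := by exact_mod_cast hS.ne'
    rw [integrand_mergeLast _ _ hS, integrand_mergeLast _ _ hS,
      show -(s (Fin.last (m + 1)) - 1 + (l : ℂ)) =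
        -(s (Fin.last (m + 1)) - 1 + ((0 : ℕ) : ℂ)) - l by push_cast; ring,
      Complex.cpow_sub _ _ hne, Complex.cpow_natCast]
    simp only [norm_mul, norm_div, norm_pow, Complex.norm_real, Real.norm_of_nonneg ha0.le,
      Real.norm_of_nonneg hS.le]
    have key : (a / ∑ i, y i) ^ l ≤ (a / A) ^ l := by gcongr
    calc _ = ‖Ring.choose (-(z - 1)) l‖ * (a / ∑ i, y i) ^ l / ‖z - 1‖ *
          (‖integrand (fun i => s i.castSucc) y‖ * ‖((∑ i, y i : ℝ) : ℂ) ^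
            (-(s (Fin.last (m + 1)) - 1 + ((0 : ℕ) : ℂ)))‖) := by
          rw [div_pow]; ring
      _ ≤ _ := by gcongr
  have hsum := hasSum_integral_of_summable_integral_norm
    (μ := volume.restrict (domain fun i : Fin (m + 1) => α i.castSucc))
    (F := fun (l : ℕ) y =>
      Ring.choose (-(z - 1)) l * (a : ℂ) ^ l / (z - 1) * integrand (mergeLast s l) y)
    (fun l => (hint l).const_mul _) (by
      have hs1 := (summable_norm_choose_mul_pow (-(z - 1)) (r := a / A) (by positivity)
        ((div_lt_one hA0).2 hlt)).div_const ‖z - 1‖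
      refine Summable.of_nonneg_of_le (fun l => integral_nonneg fun y => norm_nonneg _)
        (fun l => ?_) (hs1.mul_right (∫ y in domain fun i : Fin (m + 1) => α i.castSucc,
          ‖integrand (mergeLast s (0 : ℕ)) y‖))
      rw [← integral_const_mul]
      exact integral_mono_ae ((hint l).const_mul _).norm ((hint 0).norm.const_mul _) (hbound l))
  convert! hsum using 1
  refine setIntegral_congr_fun (measurableSet_domain _) fun y hy => ?_
  have hy' := sum_le_of_mem_domain hy
  have hS : 0 < ∑ i, y i := by linarith
  have h := (hasSum_choose_mul_cpow ha0 (show a < ∑ i, y i by linarith) (-(z - 1))).mul_left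
    (integrand (fun i => s i.castSucc) y / (z - 1))
  refine Eq.trans ?_ (h.tsum_eq.symm.trans (tsum_congr fun l => ?_))
  · ring
  · rw [integrand_mergeLast _ _ hS, ← hz, neg_add, ← sub_eq_add_neg]
    ring

lemma IteratedHasSum.mul_left {F : (Fin m → ℕ) → ℂ} {S : ℂ} (c : ℂ) (h : IteratedHasSum m F S) :
    IteratedHasSum m (fun k => c * F k) (c * S) := by
  induction m generalizing S with
  | zero => exact congrArg (c * ·) h
  | succ m ih =>
    obtain ⟨g, hg, hS⟩ := h
    exact ⟨fun l => c * g l, fun l => ih (hg l), hS.mul_left c⟩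

lemma IteratedHasSum.hasSum {F : (Fin m → ℕ) → ℂ} {S : ℂ} (h : IteratedHasSum m F S)
    (hF : Summable F) : HasSum F S := by
  induction m generalizing S with
  | zero =>
    rw [← show F Fin.elim0 = S from h]
    convert! hasSum_unique F
  | succ m ih =>
    obtain ⟨g, hg, hS⟩ := h
    have he := (Fin.snocEquiv fun _ : Fin (m + 1) => ℕ).summable_iff.2 hF
    have hfib (l : ℕ) := ih (hg l) (he.prod_factor l)
    have h1 := he.hasSum.prod_fiberwise hfib
    rw [hS.unique h1, ← (Fin.snocEquiv fun _ : Fin (m + 1) => ℕ).hasSum_iff]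
    exact he.hasSum

theorem iteratedHasSum_term (α : Fin (m + 1) → ℝ) (hα : ∀ i, 0 < α i)
    (hα' : ∀ i : Fin (m + 1), i ≠ 0 → α i < ∑ j ∈ Finset.Iio i, α j) (s : Fin (m + 1) → ℂ)
    (hs : ∀ j : Fin (m + 1), (m : ℝ) + 1 - ((j : ℕ) : ℝ) < (∑ i ∈ Finset.Ici j, s i).re) :
    IteratedHasSum m (term α s) (Y α s) := by
  induction m with
  | zero =>
    have h0 := hs 0
    rw [show (0 : Fin (0 + 1)) = Fin.last 0 from rfl, sum_Ici_last] at h0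
    have h2 : Finset.Ici (0 : Fin 1) = {0} := rfl
    simp only [IteratedHasSum, Y, integral_domain_fin_one, integrand_fin_one]
    rw [integral_add_cpow (by simpa using hα 0) (by simpa using h0)]
    simp [term, tailExp, h2]
  | succ m ih =>
    refine ⟨_, fun l => ?_, hasSum_Y_mergeLast α hα ?_ s hs⟩
    · simp only [term_snoc]
      refine (ih _ (fun i => hα _) (fun i hi => ?_) _
        (re_sum_Ici_mergeLast hs (by simp))).mul_left _
      rw [← sum_Iio_castSucc]
      exact hα' _ ((Fin.castSucc_ne_zero_iff).2 hi)
    · rw [← sum_Iio_last]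
      exact hα' _ (Fin.last_pos.ne')

lemma norm_choose_neg_le {z : ℂ} {N : ℕ} (hz : ‖z‖ ≤ N + 1) (k : ℕ) :
    ‖Ring.choose (-z) k‖ ≤ ((k + N).choose N : ℝ) := by
  have h (k : ℕ) : ‖(descPochhammer ℤ k).smeval (-z)‖ ≤ ((N + 1).ascFactorial k : ℝ) := by
    induction k with
    | zero => simp
    | succ k ih =>
      rw [descPochhammer_succ_right, Polynomial.smeval_mul, norm_mul, Nat.ascFactorial_succ,
        mul_comm]
      push_cast
      gcongr
      have : (Polynomial.X - (k : Polynomial ℤ)).smeval (-z) = -(z + k) := by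
        simp [Polynomial.smeval_sub, Polynomial.smeval_natCast]
        ring
      rw [this, norm_neg]
      refine (norm_add_le _ _).trans ?_
      simpa using hz
  rw [Ring.choose_eq_smul, norm_smul, norm_inv, RCLike.norm_natCast,
    inv_mul_le_iff₀ (by positivity)]
  refine (h k).trans (le_of_eq ?_)
  rw [Nat.ascFactorial_eq_factorial_mul_choose, ← Nat.choose_symm_add, add_comm N k]
  push_cast
  rfl

/-- Nested negative binomial series converge where the ratios sum to less than one. -/
lemma summable_prod_choose_mul_pow (x : Fin m → ℝ) (hx : ∀ i, 0 ≤ x i) (hx1 : ∑ i, x i < 1)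
    (N : ℕ) :
    Summable fun k : Fin m → ℕ => ∏ j, (((k j + (N + ∑ i ∈ Finset.Ioi j, k i)).choose
      (N + ∑ i ∈ Finset.Ioi j, k i) : ℕ) : ℝ) * x j ^ k j := by
  induction m with
  | zero => exact (hasSum_unique _).summable
  | succ m ih =>
    rw [Fin.sum_univ_succ] at hx1
    have hnn : 0 ≤ ∑ i : Fin m, x i.succ := Finset.sum_nonneg fun i _ => hx _
    have hx0 : ‖x 0‖ < 1 := by
      rw [Real.norm_of_nonneg (hx 0)]
      linarith
    have hd : 0 < 1 - x 0 := by linarith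
    rw [← ((Equiv.prodComm _ _).trans (Fin.consEquiv fun _ : Fin (m + 1) => ℕ)).summable_iff,
      summable_prod_of_nonneg]
    · simp only [Function.comp_apply, Equiv.trans_apply, Equiv.prodComm_apply, Prod.swap,
        Fin.consEquiv_apply, Fin.prod_univ_succ, Fin.cons_zero, Fin.cons_succ,
        Fin.sum_Ioi_zero, Fin.sum_Ioi_succ]
      have hgeo (K : ℕ) := hasSum_choose_mul_geometric_of_norm_lt_one K hx0
      refine ⟨fun k => (hgeo _).summable.mul_right _, ?_⟩
      simp only [tsum_mul_right, (hgeo _).tsum_eq]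
      refine ((ih (fun i => x i.succ / (1 - x 0)) (fun i => div_nonneg (hx _) hd.le) ?_).mul_left
        (1 / (1 - x 0) ^ (N + 1))).congr fun k => ?_
      · rw [← Finset.sum_div, div_lt_one hd]
        linarith
      · simp only [div_pow, mul_div_assoc', Finset.prod_div_distrib, Finset.prod_pow_eq_pow_sum]
        rw [show N + ∑ i, k i + 1 = N + 1 + ∑ i, k i by ring, pow_add (1 - x 0) (N + 1)]
        field_simp
    · intro k
      exact Finset.prod_nonneg fun j _ => mul_nonneg (Nat.cast_nonneg _) (pow_nonneg (hx _) _)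

lemma tailExp_eq_add (s : Fin (m + 1) → ℂ) (k : Fin m → ℕ) (j : Fin (m + 1)) :
    tailExp s k j = tailExp s 0 j +
      ((∑ i ∈ Finset.univ.filter (fun i : Fin m => (j : ℕ) ≤ (i : ℕ)), k i : ℕ) : ℂ) := by
  simp [tailExp]

theorem summable_term (α : Fin (m + 1) → ℝ) (hα : ∀ i, 0 < α i) (s : Fin (m + 1) → ℂ)
    (hs : ∀ j : Fin (m + 1), (m : ℝ) + 1 - ((j : ℕ) : ℝ) < (∑ i ∈ Finset.Ici j, s i).re)
    (hlt : ∑ j : Fin m, α j.succ < α 0) : Summable (term α s) := by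
  have hre (j : Fin (m + 1)) : 0 < (tailExp s 0 j).re := by
    have := hs j
    simp only [tailExp, Pi.zero_apply, Nat.cast_zero, Finset.sum_const_zero, add_zero,
      Complex.sub_re, Complex.add_re, Complex.natCast_re, Complex.one_re]
    linarith
  obtain ⟨N, hN⟩ : ∃ N : ℕ, ∀ j, ‖tailExp s 0 j‖ ≤ N := by
    obtain ⟨N, hN⟩ := exists_nat_ge (∑ j, ‖tailExp s 0 j‖)
    exact ⟨N, fun j => (Finset.single_le_sum (f := fun j => ‖tailExp s 0 j‖)
      (fun i _ => norm_nonneg _) (Finset.mem_univ j)).trans hN⟩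
  have h0 := hα 0
  have hsum := (summable_prod_choose_mul_pow (fun j : Fin m => α j.succ / α 0)
    (fun j => div_nonneg (hα _).le h0.le) (by rwa [← Finset.sum_div, div_lt_one h0]) N).mul_left
    (α 0 ^ (-(tailExp s 0 0).re) / ∏ j, (tailExp s 0 j).re)
  refine Summable.of_norm_bounded hsum fun k => ?_
  have hchoose (j : Fin m) : ‖Ring.choose (-(tailExp s k j.succ)) (k j)‖ ≤
      (((k j + (N + ∑ i ∈ Finset.Ioi j, k i)).choose (N + ∑ i ∈ Finset.Ioi j, k i) : ℕ) : ℝ) := by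
    refine norm_choose_neg_le ?_ _
    have hfil : Finset.univ.filter (fun i : Fin m => ((j.succ : Fin (m + 1)) : ℕ) ≤ (i : ℕ)) =
        Finset.Ioi j := by
      ext i
      simp
    rw [tailExp_eq_add, hfil]
    refine (norm_add_le _ _).trans ?_
    rw [Complex.norm_natCast]
    have := hN j.succ
    push_cast
    linarith
  have hden : ∏ j, (tailExp s 0 j).re ≤ ∏ j, ‖tailExp s k j‖ := by
    refine Finset.prod_le_prod (fun j _ => (hre j).le) fun j _ => ?_
    refine le_trans ?_ (Complex.re_le_norm _)
    rw [tailExp_eq_add s k, Complex.add_re, Complex.natCast_re]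
    exact le_add_of_nonneg_right (Nat.cast_nonneg _)
  have hden0 : 0 < ∏ j, (tailExp s 0 j).re := Finset.prod_pos fun j _ => hre j
  have hpow : ‖(α 0 : ℂ) ^ (-(tailExp s k 0))‖ =
      α 0 ^ (-(tailExp s 0 0).re) / ∏ j, α 0 ^ k j := by
    rw [Complex.norm_cpow_eq_rpow_re_of_pos h0, tailExp_eq_add s k, Finset.prod_pow_eq_pow_sum]
    simp only [Fin.val_zero, Nat.zero_le, Finset.filter_true, Complex.neg_re, Complex.add_re,
      Complex.natCast_re]
    rw [neg_add, ← sub_eq_add_neg, Real.rpow_sub h0, Real.rpow_natCast]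
  unfold term
  rw [norm_div, norm_mul, norm_mul, hpow, norm_prod, norm_prod, norm_prod]
  have hnum : ∏ j : Fin m, ‖(α j.succ : ℂ) ^ k j‖ = ∏ j : Fin m, α j.succ ^ k j :=
    Finset.prod_congr rfl fun j _ => by
      rw [norm_pow, Complex.norm_real, Real.norm_of_nonneg (hα _).le]
  rw [hnum]
  have hP0 : 0 ≤ ∏ j : Fin m, α j.succ ^ k j :=
    Finset.prod_nonneg fun j _ => pow_nonneg (hα _).le _
  have hchoose' := Finset.prod_le_prod (s := Finset.univ)
    (fun j (_ : j ∈ Finset.univ) => norm_nonneg (Ring.choose (-(tailExp s k j.succ)) (k j)))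
    (fun j _ => hchoose j)
  calc _ ≤ (∏ j : Fin m, (((k j + (N + ∑ i ∈ Finset.Ioi j, k i)).choose
        (N + ∑ i ∈ Finset.Ioi j, k i) : ℕ) : ℝ)) *
        (α 0 ^ (-(tailExp s 0 0).re) / ∏ j, α 0 ^ k j) * (∏ j : Fin m, α j.succ ^ k j) /
          ∏ j, (tailExp s 0 j).re := by
        have : 0 ≤ α 0 ^ (-(tailExp s 0 0).re) / ∏ j, α 0 ^ k j := by positivity
        gcongr
    _ = _ := by
        simp only [div_pow, mul_div_assoc', Finset.prod_div_distrib, Finset.prod_mul_distrib]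
        ring

end HurwitzIntegral

end

/-- Here `n = m + 1 ≥ 2`. The integral converges absolutely, equals the iterated series
`∑_{k_n} ⋯ ∑_{k_2}`, and equals the unordered (absolutely convergent) multiple series
whenever `α_2 + ⋯ + α_n < α_1`. -/
theorem integral_function_series_expansion
    (m : ℕ) (hm : 1 ≤ m) (α : Fin (m + 1) → ℝ) (hα : ∀ i, 0 < α i)
    (hα' : ∀ i : Fin (m + 1), i ≠ 0 → α i < ∑ j ∈ Finset.Iio i, α j)
    (s : Fin (m + 1) → ℂ)
    (hs : ∀ j : Fin (m + 1), (m : ℝ) + 1 - ((j : ℕ) : ℝ) < (∑ i ∈ Finset.Ici j, s i).re) :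
    MeasureTheory.IntegrableOn (HurwitzIntegral.integrand s) (HurwitzIntegral.domain α) ∧
      HurwitzIntegral.IteratedHasSum m (HurwitzIntegral.term α s) (HurwitzIntegral.Y α s) ∧
      ((∑ j : Fin m, α j.succ) < α 0 →
        HasSum (HurwitzIntegral.term α s) (HurwitzIntegral.Y α s)) :=
  ⟨HurwitzIntegral.integrableOn_integrand α hα s hs,
    HurwitzIntegral.iteratedHasSum_term α hα hα' s hs,
    fun hlt => (HurwitzIntegral.iteratedHasSum_term α hα hα' s hs).hasSum
      (HurwitzIntegral.summable_term α hα s hs hlt)⟩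
end

section
/- Let $n\ge 2$, let $\alpha=(\alpha_1,\dots,\alpha_n)$ be real numbers with $\alpha_i>0$ and $a=(a_1,\dots,a_n)$ real numbers with $a_i\ge 0$ for all $i$, assume $\alpha_i+a_i<\sum_{j=1}^{i-1}(\alpha_j+a_j)$ for every $2\le i\le n$, and let $s=(s_1,\dots,s_n)\in\mathbb{C}^n$ satisfy $\operatorname{Re}(s_j+\cdots+s_n)>n-j+1$ for every $1\le j\le n$. Then the integral $$Y_{n,a}(\alpha;s)=\int_{[\alpha_1,\infty)\times\cdots\times[\alpha_n,\infty)}\ \prod_{i=1}^n\bigl(x_1+\cdots+x_i+a_1+\cdots+a_i\bigr)^{-s_i}\,dx$$ converges absolutely. For $k=(k_2,\dots,k_n)\in\mathbb{N}^{n-1}$ (where $\mathbb{N}=\{0,1,2,\dots\}$) and $1\le j\le n$ put $$E_j(k)=-\sum_{i=j}^n s_i+(n-j+1)-\sum_{i=j+1}^n k_i,\qquad F(k)=\frac{(\alpha_1+a_1)^{E_1(k)}}{E_1(k)}\prod_{j=2}^n\binom{E_j(k)}{k_j}\frac{(\alpha_j+a_j)^{k_j}}{E_j(k)},$$ where $\binom{z}{k}=z(z-1)\cdots(z-k+1)/k!$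 and empty sums are $0$. Then $$Y_{n,a}(\alpha;s)=(-1)^n\sum_{k_n\in\mathbb{N}}\Bigl(\sum_{k_{n-1}\in\mathbb{N}}\Bigl(\cdots\Bigl(\sum_{k_2\in\mathbb{N}}F(k_2,\dots,k_n)\Bigr)\cdots\Bigr)\Bigr),$$ where the multiple series over $k\in\mathbb{N}^{n-1}$ is summed iteratively, with $k_2$ innermost and $k_n$ outermost, and each of the successive one-variable series converges absolutely. If moreover $\sum_{j=2}^n(\alpha_j+a_j)<\alpha_1+a_1$, then the multiple series $\sum_{k\in\mathbb{N}^{n-1}}F(k)$ converges absolutely as well, and $Y_{n,a}(\alpha;s)=(-1)^n\sum_{k\in\mathbb{N}^{n-1}}F(k)$. -/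
open MeasureTheory

noncomputable section

/-- The integrand `∏_i (x_1+⋯+x_i + a_1+⋯+a_i)^{-s_i}`. -/
def shiftedIntegrand {n : ℕ} (a : Fin n → ℝ) (s : Fin n → ℂ) (x : Fin n → ℝ) : ℂ :=
  ∏ i : Fin n, (((∑ j ∈ Finset.Iic i, x j) + ∑ j ∈ Finset.Iic i, a j : ℝ) : ℂ) ^ (-(s i))

/-- The domain `[α_1,∞) × ⋯ × [α_n,∞)`. -/
def shiftedDomain {n : ℕ} (α : Fin n → ℝ) : Set (Fin n → ℝ) :=
  Set.univ.pi fun i => Set.Ici (α i)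

/-- The shifted integral function `Y_{n,a}(α; s)`. -/
def shiftedY {n : ℕ} (a α : Fin n → ℝ) (s : Fin n → ℂ) : ℂ :=
  ∫ x in shiftedDomain α, shiftedIntegrand a s x

/-- With `n = m + 1`, `p` standing for the 1-based index `j = p + 1`, and the entry `k i`
(`i : Fin m`) standing for `k_{i+2}`, this is
`-(s_j + ⋯ + s_n) + (n - j + 1) - (k_{j+1} + ⋯ + k_n)`. -/
def shiftedExponent {m : ℕ} (s : Fin (m + 1) → ℂ) (k : Fin m → ℕ) (p : Fin (m + 1)) : ℂ :=
  -(∑ i ∈ Finset.Ici p, s i) + ((m : ℂ) + 1 - (p : ℕ))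
    - ∑ i ∈ Finset.univ.filter (fun i : Fin m => (p : ℕ) ≤ (i : ℕ)), (k i : ℂ)

/-- The term of the series with index `k = (k_2,…,k_n)`, `n = m + 1`; the factor of the product
with `j : Fin m` is the one with the 1-based index `j + 2`.  `Ring.choose z k` is
`z (z-1) ⋯ (z-k+1) / k!`. -/
def shiftedTerm {m : ℕ} (a α : Fin (m + 1) → ℝ) (s : Fin (m + 1) → ℂ) (k : Fin m → ℕ) : ℂ :=
  ((α 0 + a 0 : ℝ) : ℂ) ^ shiftedExponent s k 0 / shiftedExponent s k 0
    * ∏ j : Fin m,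
        Ring.choose (shiftedExponent s k j.succ) (k j)
          * ((α j.succ + a j.succ : ℝ) : ℂ) ^ (k j) / shiftedExponent s k j.succ

/-- `IteratedHasSum m F S`: the iterated series
`∑_{k_last} ( ⋯ ( ∑_{k_first} F (k_first, …, k_last) ) ⋯ )`, with the last index outermost and
the first index innermost, has the sum `S`; every one of the one-variable series in it converges
absolutely (`HasSum` over `ℕ` in `ℂ`). -/
def IteratedHasSum : (m : ℕ) → ((Fin m → ℕ) → ℂ) → ℂ → Prop
  | 0, F, S => F Fin.elim0 = S
  | m + 1, F, S => ∃ g : ℕ → ℂ,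
      (∀ l : ℕ, IteratedHasSum m (fun k => F (Fin.snoc (α := fun _ => ℕ) k l)) (g l)) ∧ HasSum g S

end

theorem summable_norm_choose_mul_pow (z : ℂ) {r : ℝ} (hr0 : 0 ≤ r) (hr : r < 1) :
    Summable fun k : ℕ => ‖Ring.choose z k‖ * r ^ k := by
  lift r to NNReal using hr0
  have h : (r : ENNReal) < (binomialSeries ℂ z).radius :=
    lt_of_lt_of_le (by exact_mod_cast hr) binomialSeries_radius_ge_one
  have := (binomialSeries ℂ z).summable_norm_mul_pow h
  simpa [binomialSeries, FormalMultilinearSeries.ofScalars_norm] using this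

theorem hasSum_choose_mul_pow_mul_cpow (z : ℂ) {c X : ℝ} (hc : 0 ≤ c) (hcX : c < X) :
    HasSum (fun k : ℕ => Ring.choose z k * (c : ℂ) ^ k * (X : ℂ) ^ (z - k))
      (((X + c : ℝ) : ℂ) ^ z) := by
  have hX : 0 < X := hc.trans_lt hcX
  have hX' : (X : ℂ) ≠ 0 := by exact_mod_cast hX.ne'
  have hr : c / X < 1 := (div_lt_one hX).2 hcX
  have hr0 : 0 ≤ c / X := by positivity
  have hmem : ((c / X : ℝ) : ℂ) ∈ Metric.eball (0 : ℂ) 1 := by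
    rw [← ENNReal.ofReal_one, Metric.eball_ofReal]
    rw [mem_ball_zero_iff, Complex.norm_real, Real.norm_of_nonneg hr0]
    exact hr
  have h := (Complex.one_add_cpow_hasFPowerSeriesOnBall_zero (a := z)).hasSum hmem
  simp only [binomialSeries_apply, zero_add, List.ofFn_const, List.prod_replicate,
    smul_eq_mul] at h
  have h2 := h.mul_left ((X : ℂ) ^ z)
  convert! h2 using 1
  · funext k
    rw [Complex.cpow_sub _ _ hX', Complex.cpow_natCast]
    push_cast
    rw [div_pow]
    ring
  · rw [← Complex.ofReal_one, ← Complex.ofReal_add,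
      ← Complex.mul_cpow_ofReal_nonneg hX.le (by positivity), ← Complex.ofReal_mul]
    congr 2
    field_simp

theorem choose_succ_mul (z : ℂ) (k : ℕ) :
    Ring.choose z (k + 1) * ((k : ℂ) + 1) = Ring.choose z k * (z - k) := by
  have h1 : ((k + 1).factorial : ℂ) * Ring.choose z (k + 1) =
      (k.factorial : ℂ) * Ring.choose z k * (z - k) := by
    have e1 := Ring.descPochhammer_eq_factorial_smul_choose z (k + 1)
    have e2 := Ring.descPochhammer_eq_factorial_smul_choose z k
    rw [nsmul_eq_mul] at e1 e2
    rw [← e1, ← e2]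
    simp [descPochhammer_succ_right, Polynomial.smeval_mul, Polynomial.smeval_natCast]
  have hk : (k.factorial : ℂ) ≠ 0 := by exact_mod_cast k.factorial_ne_zero
  apply mul_left_cancel₀ hk
  rw [Nat.factorial_succ] at h1
  push_cast at h1
  linear_combination h1

theorem norm_choose_le (n : ℕ) {z : ℂ} (hz : ‖z‖ ≤ n + 1) (k : ℕ) :
    ‖Ring.choose z k‖ ≤ (n + k).choose n := by
  induction k with
  | zero => simp
  | succ k ih =>
    have h := congrArg norm (choose_succ_mul z k)
    have hk : ‖(k : ℂ) + 1‖ = k + 1 := by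
      exact_mod_cast Complex.norm_natCast (k + 1)
    rw [norm_mul, norm_mul, hk] at h
    have h2 : ((n + k).choose n : ℝ) * (n + k + 1) = ((n + (k + 1)).choose n : ℝ) * (k + 1) := by
      have := Nat.choose_mul_succ_eq (n + k) n
      rw [show n + k + 1 - n = k + 1 by omega] at this
      exact_mod_cast this
    have h3 : ‖z - k‖ ≤ n + k + 1 := by
      calc ‖z - k‖ ≤ ‖z‖ + ‖(k : ℂ)‖ := norm_sub_le _ _
        _ ≤ _ := by rw [Complex.norm_natCast]; linarith
    have h4 : ‖Ring.choose z (k + 1)‖ * (k + 1) ≤ ((n + (k + 1)).choose n : ℝ) * (k + 1) := by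
      rw [h, ← h2]
      gcongr
    exact le_of_mul_le_mul_right h4 (by positivity)

/-- The summand of the negative multinomial series of `(r - ∑ c)⁻¹ ^ (N + 1)`. -/
noncomputable def negMultinomialTerm {m : ℕ} (N : ℕ) (r : ℝ) (c : Fin m → ℝ) (k : Fin m → ℕ) : ℝ :=
  (r ^ (N + 1 + ∑ i, k i))⁻¹ *
    ∏ j, ((N + ∑ i ∈ Finset.Ioi j, k i + k j).choose (N + ∑ i ∈ Finset.Ioi j, k i) : ℝ) * c j ^ k j

theorem negMultinomialTerm_nonneg {m : ℕ} (N : ℕ) {r : ℝ} (hr : 0 ≤ r) {c : Fin m → ℝ}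
    (hc : ∀ i, 0 ≤ c i) (k : Fin m → ℕ) : 0 ≤ negMultinomialTerm N r c k := by
  have := fun j => pow_nonneg (hc j) (k j)
  refine mul_nonneg (by positivity) (Finset.prod_nonneg fun j _ => ?_)
  exact mul_nonneg (by positivity) (this j)

theorem hasSum_negBinomial (N : ℕ) {r c : ℝ} (hc : 0 ≤ c) (hcr : c < r) :
    HasSum (fun l : ℕ => (r ^ (N + 1 + l))⁻¹ * (((N + l).choose N : ℝ) * c ^ l))
      ((r - c) ^ (N + 1))⁻¹ := by
  have hr : 0 < r := hc.trans_lt hcr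
  have h1 : ‖c / r‖ < 1 := by
    rw [Real.norm_of_nonneg (by positivity)]; exact (div_lt_one hr).2 hcr
  convert! (hasSum_choose_mul_geometric_of_norm_lt_one N h1).mul_left (r ^ (N + 1))⁻¹ using 1
  · funext l
    rw [add_comm l N, div_pow, pow_add]
    field_simp
  · have : r - c ≠ 0 := by linarith
    rw [one_div, ← mul_inv, ← mul_pow]
    congr 2
    field_simp

theorem negMultinomialTerm_cons {m : ℕ} (N : ℕ) (r : ℝ) (c : Fin (m + 1) → ℝ)
    (k : Fin m → ℕ) (l : ℕ) :
    negMultinomialTerm N r c (Fin.cons l k) =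
      (r ^ (N + ∑ i, k i + 1 + l))⁻¹ * (((N + ∑ i, k i + l).choose (N + ∑ i, k i) : ℝ) * c 0 ^ l) *
      ∏ j, ((N + ∑ i ∈ Finset.Ioi j, k i + k j).choose (N + ∑ i ∈ Finset.Ioi j, k i) : ℝ)
        * c j.succ ^ k j := by
  unfold negMultinomialTerm
  rw [Fin.prod_univ_succ, Fin.sum_univ_succ]
  simp only [Fin.cons_zero, Fin.cons_succ, Fin.Ioi_zero_eq_map, Fin.Ioi_succ, Finset.sum_map,
    Fin.coe_succEmb]
  rw [← mul_assoc, show N + 1 + (l + ∑ i, k i) = N + ∑ i, k i + 1 + l by ring]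

theorem summable_negMultinomialTerm {m : ℕ} (N : ℕ) {r : ℝ} {c : Fin m → ℝ}
    (hc : ∀ i, 0 ≤ c i) (hr : ∑ i, c i < r) : Summable (negMultinomialTerm N r c) := by
  induction m generalizing r with
  | zero => exact Summable.of_finite
  | succ m ih =>
    have hr0 : 0 < r := (Finset.sum_nonneg fun i _ => hc i).trans_lt hr
    rw [Fin.sum_univ_succ] at hr
    have hsum : 0 ≤ ∑ i : Fin m, c i.succ := Finset.sum_nonneg fun i _ => hc i.succ
    let e : (Fin m → ℕ) × ℕ ≃ (Fin (m + 1) → ℕ) :=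
      (Equiv.prodComm _ _).trans (Fin.consEquiv fun _ => ℕ)
    rw [← e.summable_iff]
    rw [summable_prod_of_nonneg (f := negMultinomialTerm N r c ∘ e)
      (fun p => negMultinomialTerm_nonneg N hr0.le hc _)]
    have key : ∀ k : Fin m → ℕ, HasSum (fun l : ℕ => (negMultinomialTerm N r c ∘ e) (k, l))
        (negMultinomialTerm N (r - c 0) (fun i => c i.succ) k) := by
      intro k
      have := (hasSum_negBinomial (N + ∑ i, k i) (hc 0) (by linarith : c 0 < r)).mul_right
        (∏ j, ((N + ∑ i ∈ Finset.Ioi j, k i + k j).choose (N + ∑ i ∈ Finset.Ioi j, k i) : ℝ)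
          * c j.succ ^ k j)
      convert! this using 1
      · funext l
        exact negMultinomialTerm_cons N r c k l
      · rw [negMultinomialTerm, add_right_comm N 1]
    refine ⟨fun k => (key k).summable, ?_⟩
    rw [funext fun k => (key k).tsum_eq]
    exact ih (fun i => hc i.succ) (by linarith)

theorem IteratedHasSum.const_mul {m : ℕ} {F : (Fin m → ℕ) → ℂ} {S : ℂ} (h : IteratedHasSum m F S)
    (c : ℂ) : IteratedHasSum m (fun k => c * F k) (c * S) := by
  induction m generalizing S with
  | zero => exact congrArg (c * ·) h
  | succ m ih =>
    obtain ⟨g, hg, hS⟩ := h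
    exact ⟨fun l => c * g l, fun l => ih (hg l), hS.mul_left c⟩

theorem IteratedHasSum.tsum_eq {m : ℕ} {F : (Fin m → ℕ) → ℂ} {S : ℂ} (h : IteratedHasSum m F S)
    (hF : Summable F) : ∑' k, F k = S := by
  induction m generalizing S with
  | zero =>
    rw [tsum_eq_single Fin.elim0 fun k hk => absurd (Subsingleton.elim _ _) hk]
    exact h
  | succ m ih =>
    obtain ⟨g, hg, hS⟩ := h
    have hF' := (Fin.snocEquiv fun _ => ℕ).summable_iff.2 hF
    rw [← (Fin.snocEquiv fun _ => ℕ).tsum_eq, ← hS.tsum_eq]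
    refine hF'.tsum_prod.trans ?_
    exact tsum_congr fun l => ih (hg l) (hF'.prod_factor l)

theorem measurableSet_shiftedDomain {n : ℕ} (α : Fin n → ℝ) : MeasurableSet (shiftedDomain α) :=
  MeasurableSet.univ_pi fun _ => measurableSet_Ici

theorem mem_shiftedDomain {n : ℕ} {α x : Fin n → ℝ} : x ∈ shiftedDomain α ↔ ∀ i, α i ≤ x i := by
  simp [shiftedDomain, Pi.le_def]

theorem measurable_shiftedIntegrand {n : ℕ} (a : Fin n → ℝ) (s : Fin n → ℂ) :
    Measurable (shiftedIntegrand a s) := by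
  unfold shiftedIntegrand
  refine Finset.measurable_prod _ fun i _ => ?_
  fun_prop

theorem shiftedIntegrand_snoc {n : ℕ} (a : Fin (n + 1) → ℝ) (s : Fin (n + 1) → ℂ)
    (y : Fin n → ℝ) (t : ℝ) :
    shiftedIntegrand a s (Fin.snoc (α := fun _ => ℝ) y t) =
      shiftedIntegrand (fun i => a i.castSucc) (fun i => s i.castSucc) y *
        ((((∑ i, y i) + (∑ i : Fin n, a i.castSucc) + a (Fin.last n)) + t : ℝ) : ℂ) ^
          (-s (Fin.last n)) := by
  unfold shiftedIntegrand
  rw [Fin.prod_univ_castSucc]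
  congr 1
  · simp [Fin.sum_Iic_castSucc]
  · have h : Finset.Iic (Fin.last n) = Finset.univ := Finset.Iic_top
    rw [h, Fin.sum_univ_castSucc, Fin.sum_univ_castSucc]
    simp only [Fin.snoc_castSucc, Fin.snoc_last]
    congr 2
    ring

/-- Appending the last coordinate, as a measurable equivalence. -/
noncomputable def snocMeasurableEquiv (n : ℕ) : (Fin n → ℝ) × ℝ ≃ᵐ (Fin (n + 1) → ℝ) :=
  MeasurableEquiv.prodComm.trans (MeasurableEquiv.piFinSuccAbove (fun _ => ℝ) (Fin.last n)).symm

theorem snocMeasurableEquiv_apply (n : ℕ) (p : (Fin n → ℝ) × ℝ) :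
    snocMeasurableEquiv n p = Fin.snoc (α := fun _ => ℝ) p.1 p.2 := by
  simp [snocMeasurableEquiv, MeasurableEquiv.prodComm, Fin.insertNthEquiv]

theorem measurePreserving_snoc_shiftedDomain {n : ℕ} (α : Fin (n + 1) → ℝ) :
    MeasurePreserving (snocMeasurableEquiv n)
      ((volume.restrict (shiftedDomain fun i : Fin n => α i.castSucc)).prod
        (volume.restrict (Set.Ici (α (Fin.last n)))))
      (volume.restrict (shiftedDomain α)) := by
  have h1 : MeasurePreserving (snocMeasurableEquiv n) (volume.prod volume) volume :=
    (Measure.measurePreserving_swap (μ := (volume : Measure (Fin n → ℝ)))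
      (ν := (volume : Measure ℝ))).trans
      ((volume_preserving_piFinSuccAbove (fun _ : Fin (n + 1) => ℝ) (Fin.last n)).symm)
  have h2 := h1.restrict_preimage (measurableSet_shiftedDomain α)
  rw [Measure.prod_restrict]
  convert h2 using 2
  ext p
  simp only [Set.mem_prod, Set.mem_preimage, mem_shiftedDomain, snocMeasurableEquiv_apply,
    Fin.forall_fin_succ', Fin.snoc_castSucc, Fin.snoc_last, Set.mem_Ici]

theorem integrableOn_Ici_add_cpow {z : ℂ} (hz : 1 < z.re) {X c : ℝ} (hX : 0 < X + c) :
    IntegrableOn (fun t : ℝ => ((X + t : ℝ) : ℂ) ^ (-z)) (Set.Ici c) := by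
  rw [integrableOn_Ici_iff_integrableOn_Ioi]
  have h := integrableOn_Ioi_cpow_of_lt (a := -z) (by simpa using hz) hX
  rw [← (measurePreserving_add_left volume X).integrableOn_comp_preimage
    (measurableEmbedding_addLeft X)] at h
  simpa [Function.comp_def] using h

theorem integral_Ici_add_cpow {z : ℂ} (hz : 1 < z.re) {X c : ℝ} (hX : 0 < X + c) :
    ∫ t in Set.Ici c, ((X + t : ℝ) : ℂ) ^ (-z) = -((X + c : ℝ) : ℂ) ^ (1 - z) / (1 - z) := by
  rw [integral_Ici_eq_integral_Ioi]
  have h := integral_Ioi_cpow_of_lt (a := -z) (by simpa using hz) hX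
  rw [← (measurePreserving_add_left volume X).setIntegral_preimage_emb
    (measurableEmbedding_addLeft X), neg_add_eq_sub] at h
  simpa using h

theorem integral_Ici_norm_add_cpow {z : ℂ} (hz : 1 < z.re) {X c : ℝ} (hX : 0 < X + c) :
    ∫ t in Set.Ici c, ‖((X + t : ℝ) : ℂ) ^ (-z)‖ = (X + c) ^ (1 - z.re) / (z.re - 1) := by
  have h := integral_Ioi_rpow_of_lt (a := -z.re) (by simpa using hz) hX
  rw [← (measurePreserving_add_left volume X).setIntegral_preimage_emb
    (measurableEmbedding_addLeft X), neg_add_eq_sub] at h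
  rw [integral_Ici_eq_integral_Ioi, ← neg_sub 1 z.re, div_neg, ← neg_div, ← h]
  simp only [Set.preimage_const_add_Ioi, add_sub_cancel_left]
  refine setIntegral_congr_fun measurableSet_Ioi fun t ht => ?_
  rw [Set.mem_Ioi] at ht
  rw [Complex.norm_cpow_eq_rpow_re_of_pos (by linarith), Complex.neg_re]

theorem integrableOn_shiftedIntegrand_of_last {n : ℕ} {a α : Fin (n + 1) → ℝ}
    {s : Fin (n + 1) → ℂ} (hα : ∀ i, 0 < α i) (ha : ∀ i, 0 ≤ a i) (hs : 1 < (s (Fin.last n)).re)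
    (h : IntegrableOn (fun y : Fin n → ℝ =>
      shiftedIntegrand (fun i => a i.castSucc) (fun i => s i.castSucc) y *
        ((((∑ i, y i) + (∑ i : Fin n, a i.castSucc) + a (Fin.last n)) + α (Fin.last n) : ℝ) : ℂ) ^
          (1 - s (Fin.last n))) (shiftedDomain fun i : Fin n => α i.castSucc)) :
    IntegrableOn (shiftedIntegrand a s) (shiftedDomain α) := by
  rw [IntegrableOn, ← (measurePreserving_snoc_shiftedDomain α).integrable_comp_emb
    (MeasurableEquiv.measurableEmbedding _)]
  have hmeas : Measurable (shiftedIntegrand a s ∘ snocMeasurableEquiv n) :=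
    (measurable_shiftedIntegrand a s).comp (snocMeasurableEquiv n).measurable
  rw [integrable_prod_iff hmeas.aestronglyMeasurable]
  simp only [Function.comp_apply, snocMeasurableEquiv_apply, shiftedIntegrand_snoc]
  have hpos : ∀ y ∈ shiftedDomain (fun i : Fin n => α i.castSucc),
      0 < (∑ i, y i) + (∑ i : Fin n, a i.castSucc) + a (Fin.last n) + α (Fin.last n) := by
    intro y hy
    rw [mem_shiftedDomain] at hy
    have h1 : 0 ≤ ∑ i, y i := Finset.sum_nonneg fun i _ => (hα i.castSucc).le.trans (hy i)
    have h2 : 0 ≤ ∑ i : Fin n, a i.castSucc := Finset.sum_nonneg fun i _ => ha _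
    linarith [ha (Fin.last n), hα (Fin.last n)]
  constructor
  · filter_upwards [ae_restrict_mem (measurableSet_shiftedDomain _)] with y hy
    exact (integrableOn_Ici_add_cpow hs (hpos y hy)).const_mul _
  · refine (h.norm.div_const ((s (Fin.last n)).re - 1)).congr ?_
    filter_upwards [ae_restrict_mem (measurableSet_shiftedDomain _)] with y hy
    simp only [norm_mul]
    rw [integral_const_mul, integral_Ici_norm_add_cpow hs (hpos y hy),
      Complex.norm_cpow_eq_rpow_re_of_pos (hpos y hy), Complex.sub_re, Complex.one_re, mul_div_assoc]

theorem shiftedY_eq_integral_last {n : ℕ} {a α : Fin (n + 1) → ℝ}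
    {s : Fin (n + 1) → ℂ} (hα : ∀ i, 0 < α i) (ha : ∀ i, 0 ≤ a i) (hs : 1 < (s (Fin.last n)).re)
    (h : IntegrableOn (shiftedIntegrand a s) (shiftedDomain α)) :
    shiftedY a α s = ∫ y in shiftedDomain (fun i : Fin n => α i.castSucc),
      shiftedIntegrand (fun i => a i.castSucc) (fun i => s i.castSucc) y *
        (-((((∑ i, y i) + (∑ i : Fin n, a i.castSucc) + a (Fin.last n)) + α (Fin.last n) : ℝ) : ℂ) ^
          (1 - s (Fin.last n)) / (1 - s (Fin.last n))) := by
  have h' := h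
  rw [IntegrableOn, ← (measurePreserving_snoc_shiftedDomain α).integrable_comp_emb
    (MeasurableEquiv.measurableEmbedding _)] at h'
  rw [shiftedY, ← (measurePreserving_snoc_shiftedDomain α).integral_comp
    (MeasurableEquiv.measurableEmbedding _)]
  refine (integral_prod _ h').trans ?_
  refine setIntegral_congr_fun (measurableSet_shiftedDomain _) fun y hy => ?_
  simp only [Function.comp_apply, snocMeasurableEquiv_apply, shiftedIntegrand_snoc]
  rw [integral_const_mul, integral_Ici_add_cpow hs]
  rw [mem_shiftedDomain] at hy
  have h1 : 0 ≤ ∑ i, y i := Finset.sum_nonneg fun i _ => (hα i.castSucc).le.trans (hy i)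
  have h2 : 0 ≤ ∑ i : Fin n, a i.castSucc := Finset.sum_nonneg fun i _ => ha _
  linarith [ha (Fin.last n), hα (Fin.last n)]

/-- The exponents left after integrating out the last variable and taking the `l`-th term of the
binomial series. -/
noncomputable def contractExponent {n : ℕ} (s : Fin (n + 2) → ℂ) (l : ℕ) : Fin (n + 1) → ℂ := fun i =>
  s i.castSucc + if i = Fin.last n then s (Fin.last (n + 1)) - 1 + l else 0

theorem sum_Ici_castSucc_eq {n : ℕ} (s : Fin (n + 2) → ℂ) (j : Fin (n + 1)) :
    ∑ i ∈ Finset.Ici j.castSucc, s i =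
      ∑ i ∈ Finset.Ici j, s i.castSucc + s (Fin.last (n + 1)) := by
  have h : Finset.Ici j.castSucc = insert (Fin.last (n + 1)) ((Finset.Ici j).map Fin.castSuccEmb) := by
    rw [Fin.map_castSuccEmb_Ici]
    ext i
    simp only [Finset.mem_Ici, Finset.mem_insert, Finset.mem_Ico]
    constructor
    · intro hi
      rcases (Fin.le_last i).eq_or_lt with h | h
      · exact Or.inl h
      · exact Or.inr ⟨hi, h⟩
    · rintro (rfl | h)
      · exact Fin.le_last _
      · exact h.1
  rw [h, Finset.sum_insert (by simp [Fin.map_castSuccEmb_Ici]), Finset.sum_map, add_comm]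
  rfl

theorem sum_Ici_contractExponent {n : ℕ} (s : Fin (n + 2) → ℂ) (l : ℕ) (j : Fin (n + 1)) :
    ∑ i ∈ Finset.Ici j, contractExponent s l i = ∑ i ∈ Finset.Ici j.castSucc, s i - 1 + l := by
  rw [sum_Ici_castSucc_eq]
  simp only [contractExponent, Finset.sum_add_distrib, Finset.sum_ite_eq', Finset.mem_Ici,
    Fin.le_last, if_true]
  ring

theorem contractExponent_re_lt {n : ℕ} {s : Fin (n + 2) → ℂ}
    (hs : ∀ j : Fin (n + 2), ((n + 1 : ℕ) : ℝ) + 1 - (j : ℕ) < (∑ i ∈ Finset.Ici j, s i).re)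
    (l : ℕ) (j : Fin (n + 1)) :
    (n : ℝ) + 1 - (j : ℕ) < (∑ i ∈ Finset.Ici j, contractExponent s l i).re := by
  have := hs j.castSucc
  rw [sum_Ici_contractExponent]
  simp only [Nat.cast_add, Nat.cast_one, Fin.val_castSucc, Complex.add_re, Complex.sub_re,
    Complex.one_re, Complex.natCast_re] at this ⊢
  have : (0 : ℝ) ≤ l := by positivity
  linarith

theorem one_lt_re_last {n : ℕ} {s : Fin (n + 1) → ℂ}
    (hs : ∀ j : Fin (n + 1), (n : ℝ) + 1 - (j : ℕ) < (∑ i ∈ Finset.Ici j, s i).re) :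
    1 < (s (Fin.last n)).re := by
  have h := hs (Fin.last n)
  have h' : Finset.Ici (Fin.last n) = {Fin.last n} := Finset.Ici_top
  rw [h', Finset.sum_singleton] at h
  simpa using h

theorem shiftedIntegrand_contractExponent {n : ℕ} (a : Fin (n + 1) → ℝ) (s : Fin (n + 2) → ℂ)
    (l : ℕ) {y : Fin (n + 1) → ℝ} (hy : 0 < (∑ i, y i) + ∑ i, a i) :
    shiftedIntegrand a (contractExponent s l) y =
      shiftedIntegrand a (fun i => s i.castSucc) y *
        (((∑ i, y i) + ∑ i, a i : ℝ) : ℂ) ^ (1 - s (Fin.last (n + 1)) - l) := by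
  unfold shiftedIntegrand
  rw [Fin.prod_univ_castSucc, Fin.prod_univ_castSucc, mul_assoc]
  have h : Finset.Iic (Fin.last n) = Finset.univ := Finset.Iic_top
  congr 1
  · refine Finset.prod_congr rfl fun i _ => ?_
    rw [contractExponent, if_neg (Fin.castSucc_lt_last i).ne, add_zero]
  · rw [h, ← Complex.cpow_add _ _ (by exact_mod_cast hy.ne'), contractExponent, if_pos rfl]
    congr 1
    ring

theorem sum_add_sum_le_of_mem_shiftedDomain {n : ℕ} {a α y : Fin n → ℝ}
    (hy : y ∈ shiftedDomain α) : ∑ i, (α i + a i) ≤ (∑ i, y i) + ∑ i, a i := by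
  rw [mem_shiftedDomain] at hy
  rw [Finset.sum_add_distrib]
  gcongr with i
  exact hy i

theorem sum_shift_pos {n : ℕ} {a α : Fin (n + 1) → ℝ} (hα : ∀ i, 0 < α i) (ha : ∀ i, 0 ≤ a i) :
    0 < ∑ i, (α i + a i) :=
  Finset.sum_pos (fun i _ => add_pos_of_pos_of_nonneg (hα i) (ha i)) Finset.univ_nonempty

theorem integrableOn_shiftedIntegrand (m : ℕ) {a α : Fin (m + 1) → ℝ} {s : Fin (m + 1) → ℂ}
    (hα : ∀ i, 0 < α i) (ha : ∀ i, 0 ≤ a i)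
    (hs : ∀ j : Fin (m + 1), (m : ℝ) + 1 - (j : ℕ) < (∑ i ∈ Finset.Ici j, s i).re) :
    IntegrableOn (shiftedIntegrand a s) (shiftedDomain α) := by
  induction m with
  | zero =>
    refine integrableOn_shiftedIntegrand_of_last hα ha (one_lt_re_last hs) ?_
    have : IsFiniteMeasure (volume : Measure (Fin 0 → ℝ)) := by
      rw [volume_pi, Measure.pi_of_empty]; infer_instance
    exact Integrable.of_finite
  | succ m ih =>
    have hs1 := one_lt_re_last hs
    refine integrableOn_shiftedIntegrand_of_last hα ha hs1 ?_
    have h := ih (a := fun i => a i.castSucc) (α := fun i => α i.castSucc)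
      (s := contractExponent s 0) (fun i => hα _) (fun i => ha _) (contractExponent_re_lt hs 0)
    refine h.norm.mono' ?_ ?_
    · refine ((measurable_shiftedIntegrand _ _).mul ?_).aestronglyMeasurable
      fun_prop
    · filter_upwards [ae_restrict_mem (measurableSet_shiftedDomain _)] with y hy
      have hX := (sum_shift_pos (fun i : Fin (m + 1) => hα i.castSucc)
        (fun i => ha i.castSucc)).trans_le (sum_add_sum_le_of_mem_shiftedDomain hy)
      have hc := add_pos_of_nonneg_of_pos (ha (Fin.last (m + 1))) (hα (Fin.last (m + 1)))
      rw [shiftedIntegrand_contractExponent _ _ _ hX, norm_mul, norm_mul]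
      gcongr
      rw [Complex.norm_cpow_eq_rpow_re_of_pos (by linarith),
        Complex.norm_cpow_eq_rpow_re_of_pos hX]
      simp only [Nat.cast_zero, sub_zero, Complex.sub_re, Complex.one_re]
      exact Real.rpow_le_rpow_of_nonpos hX (by linarith) (by linarith)

theorem shiftedY_fin_one {a α : Fin 1 → ℝ} {s : Fin 1 → ℂ}
    (hα : ∀ i, 0 < α i) (ha : ∀ i, 0 ≤ a i)
    (hs : ∀ j : Fin 1, ((0 : ℕ) : ℝ) + 1 - (j : ℕ) < (∑ i ∈ Finset.Ici j, s i).re) :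
    shiftedY a α s = -((α 0 + a 0 : ℝ) : ℂ) ^ (1 - s 0) / (1 - s 0) := by
  rw [shiftedY_eq_integral_last hα ha (one_lt_re_last hs) (integrableOn_shiftedIntegrand 0 hα ha hs)]
  have hd : shiftedDomain (fun i : Fin 0 => α i.castSucc) = Set.univ := by
    ext y; simp [mem_shiftedDomain]
  rw [hd, Measure.restrict_univ, volume_pi, Measure.pi_of_empty, integral_dirac]
  simp [shiftedIntegrand, add_comm]

theorem hasSum_shiftedY_contractExponent {m : ℕ} {a α : Fin (m + 2) → ℝ} {s : Fin (m + 2) → ℂ}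
    (hα : ∀ i, 0 < α i) (ha : ∀ i, 0 ≤ a i)
    (hlt : α (Fin.last (m + 1)) + a (Fin.last (m + 1)) <
      ∑ i : Fin (m + 1), (α i.castSucc + a i.castSucc))
    (hs : ∀ j : Fin (m + 2), ((m + 1 : ℕ) : ℝ) + 1 - (j : ℕ) < (∑ i ∈ Finset.Ici j, s i).re) :
    HasSum (fun l : ℕ => Ring.choose (1 - s (Fin.last (m + 1))) l
        * ((α (Fin.last (m + 1)) + a (Fin.last (m + 1)) : ℝ) : ℂ) ^ l / (1 - s (Fin.last (m + 1)))
        * shiftedY (fun i => a i.castSucc) (fun i => α i.castSucc) (contractExponent s l))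
      (-shiftedY a α s) := by
  set z := s (Fin.last (m + 1)) with hz
  set c := α (Fin.last (m + 1)) + a (Fin.last (m + 1)) with hc
  set B := ∑ i : Fin (m + 1), (α i.castSucc + a i.castSucc) with hB
  set D := shiftedDomain (fun i : Fin (m + 1) => α i.castSucc) with hD
  have hcpos : 0 < c := add_pos_of_pos_of_nonneg (hα _) (ha _)
  have hBpos : 0 < B := hcpos.trans hlt
  have hX : ∀ y ∈ D, B ≤ (∑ i, y i) + ∑ i : Fin (m + 1), a i.castSucc :=
    fun y hy => sum_add_sum_le_of_mem_shiftedDomain hy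
  set coef : ℕ → ℂ := fun l => Ring.choose (1 - z) l * (c : ℂ) ^ l / (1 - z) with hcoef
  let G : ℕ → (Fin (m + 1) → ℝ) → ℂ := fun l y =>
    coef l * shiftedIntegrand (fun i => a i.castSucc) (contractExponent s l) y
  have hint : ∀ l, IntegrableOn (shiftedIntegrand (fun i => a i.castSucc) (contractExponent s l)) D :=
    fun l => integrableOn_shiftedIntegrand m (fun i => hα _) (fun i => ha _)
      (contractExponent_re_lt hs l)
  have hG : ∀ l, IntegrableOn (G l) D := fun l => (hint l).const_mul _
  have hnorm : ∀ l, ∀ y ∈ D, ‖shiftedIntegrand (fun i => a i.castSucc) (contractExponent s l) y‖ ≤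
      ‖shiftedIntegrand (fun i => a i.castSucc) (contractExponent s 0) y‖ * (B ^ l)⁻¹ := by
    intro l y hy
    have hXy := hBpos.trans_le (hX y hy)
    rw [shiftedIntegrand_contractExponent _ _ _ hXy, shiftedIntegrand_contractExponent _ _ _ hXy,
      norm_mul, norm_mul, mul_assoc]
    gcongr
    rw [Nat.cast_zero, sub_zero, Complex.cpow_sub _ _ (by exact_mod_cast hXy.ne'),
      Complex.cpow_natCast, norm_div, div_eq_mul_inv, norm_pow, Complex.norm_real,
      Real.norm_of_nonneg hXy.le]
    gcongr
    exact hX y hy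
  have hsum : Summable fun l => ∫ y in D, ‖G l y‖ := by
    set I := ∫ y in D, ‖shiftedIntegrand (fun i => a i.castSucc) (contractExponent s 0) y‖
    have h1 := ((summable_norm_choose_mul_pow (1 - z) (r := c / B) (by positivity)
      ((div_lt_one hBpos).2 hlt)).mul_right (‖1 - z‖⁻¹ * I))
    refine Summable.of_nonneg_of_le (fun l => integral_nonneg fun y => norm_nonneg _)
      (fun l => ?_) h1
    have h2 : ∫ y in D, ‖G l y‖ ≤ ∫ y in D, ‖coef l‖ *
        (‖shiftedIntegrand (fun i => a i.castSucc) (contractExponent s 0) y‖ * (B ^ l)⁻¹) := by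
      refine setIntegral_mono_on (hG l).norm (((hint 0).norm.mul_const _).const_mul _)
        (measurableSet_shiftedDomain _) fun y hy => ?_
      rw [norm_mul]
      gcongr
      exact hnorm l y hy
    refine h2.trans (le_of_eq ?_)
    rw [integral_const_mul, integral_mul_const]
    simp only [hcoef, norm_div, norm_mul, norm_pow, Complex.norm_real,
      Real.norm_of_nonneg hcpos.le, div_pow]
    ring
  have hmain := hasSum_integral_of_summable_integral_norm hG hsum
  convert! hmain using 1
  · funext l
    exact (integral_const_mul _ _).symm
  · rw [shiftedY_eq_integral_last hα ha (one_lt_re_last hs)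
      (integrableOn_shiftedIntegrand (m + 1) hα ha hs), ← integral_neg]
    refine setIntegral_congr_fun (measurableSet_shiftedDomain _) fun y hy => ?_
    have hXy := hBpos.trans_le (hX y hy)
    have hser := ((hasSum_choose_mul_pow_mul_cpow (1 - z) hcpos.le (hlt.trans_le (hX y hy))).mul_left
      (shiftedIntegrand (fun i => a i.castSucc) (fun i => s i.castSucc) y)).div_const (1 - z)
    have hGs : HasSum (fun l => G l y)
        (shiftedIntegrand (fun i => a i.castSucc) (fun i => s i.castSucc) y *
          (((∑ i, y i) + (∑ i : Fin (m + 1), a i.castSucc) + c : ℝ) : ℂ) ^ (1 - z) / (1 - z)) := by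
      convert! hser using 1
      funext l
      simp only [G, hcoef]
      rw [shiftedIntegrand_contractExponent _ _ _ hXy]
      ring
    refine Eq.trans ?_ hGs.tsum_eq.symm
    have : (∑ i, y i) + (∑ i : Fin (m + 1), a i.castSucc) + a (Fin.last (m + 1)) +
        α (Fin.last (m + 1)) = (∑ i, y i) + (∑ i : Fin (m + 1), a i.castSucc) + c := by
      rw [hc]; ring
    simp only [this]
    ring

theorem shiftedExponent_snoc_castSucc {m : ℕ} (s : Fin (m + 2) → ℂ) (k : Fin m → ℕ) (l : ℕ)
    (p : Fin (m + 1)) :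
    shiftedExponent s (Fin.snoc (α := fun _ => ℕ) k l) p.castSucc =
      shiftedExponent (contractExponent s l) k p := by
  unfold shiftedExponent
  rw [sum_Ici_contractExponent, Finset.sum_filter, Finset.sum_filter, Fin.sum_univ_castSucc]
  simp only [Fin.snoc_castSucc, Fin.snoc_last, Fin.val_castSucc, Fin.val_last]
  rw [if_pos (by omega)]
  push_cast
  ring

theorem shiftedExponent_last {m : ℕ} (s : Fin (m + 1) → ℂ) (k : Fin m → ℕ) :
    shiftedExponent s k (Fin.last m) = 1 - s (Fin.last m) := by
  have h' : Finset.Ici (Fin.last m) = {Fin.last m} := Finset.Ici_top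
  unfold shiftedExponent
  rw [h', Finset.sum_singleton, Finset.filter_false_of_mem]
  · simp; ring
  · intro i _; simp

theorem shiftedTerm_snoc {m : ℕ} (a α : Fin (m + 2) → ℝ) (s : Fin (m + 2) → ℂ) (k : Fin m → ℕ)
    (l : ℕ) :
    shiftedTerm a α s (Fin.snoc (α := fun _ => ℕ) k l) =
      Ring.choose (1 - s (Fin.last (m + 1))) l
        * ((α (Fin.last (m + 1)) + a (Fin.last (m + 1)) : ℝ) : ℂ) ^ l / (1 - s (Fin.last (m + 1)))
      * shiftedTerm (fun i => a i.castSucc) (fun i => α i.castSucc) (contractExponent s l) k := by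
  unfold shiftedTerm
  rw [Fin.prod_univ_castSucc, Fin.succ_last, shiftedExponent_last]
  have h0 : (0 : Fin (m + 2)) = (0 : Fin (m + 1)).castSucc := rfl
  rw [h0]
  simp only [Fin.succ_castSucc, shiftedExponent_snoc_castSucc, Fin.snoc_castSucc, Fin.snoc_last]
  ring

theorem iteratedHasSum_shiftedTerm (m : ℕ) {α a : Fin (m + 1) → ℝ} (hα : ∀ i, 0 < α i)
    (ha : ∀ i, 0 ≤ a i)
    (hαa : ∀ i : Fin (m + 1), 0 < (i : ℕ) → α i + a i < ∑ j ∈ Finset.Iio i, (α j + a j))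
    {s : Fin (m + 1) → ℂ}
    (hs : ∀ j : Fin (m + 1), (m : ℝ) + 1 - (j : ℕ) < (∑ i ∈ Finset.Ici j, s i).re) :
    IteratedHasSum m (shiftedTerm a α s) ((-1) ^ (m + 1) * shiftedY a α s) := by
  induction m with
  | zero =>
    rw [shiftedY_fin_one hα ha hs]
    have h := shiftedExponent_last s Fin.elim0
    change shiftedExponent s Fin.elim0 0 = 1 - s 0 at h
    simp only [IteratedHasSum, shiftedTerm, h, Finset.univ_eq_empty, Finset.prod_empty]
    ring
  | succ m ih =>
    refine ⟨fun l => Ring.choose (1 - s (Fin.last (m + 1))) l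
        * ((α (Fin.last (m + 1)) + a (Fin.last (m + 1)) : ℝ) : ℂ) ^ l / (1 - s (Fin.last (m + 1)))
        * ((-1) ^ (m + 1) *
          shiftedY (fun i => a i.castSucc) (fun i => α i.castSucc) (contractExponent s l)),
      fun l => ?_, ?_⟩
    · simp only [shiftedTerm_snoc]
      refine IteratedHasSum.const_mul (ih (fun i => hα _) (fun i => ha _) (fun i hi => ?_)
        (contractExponent_re_lt hs l)) _
      have := hαa i.castSucc (by simpa using hi)
      rwa [Fin.sum_Iio_castSucc] at this
    · have hlast := hαa (Fin.last (m + 1)) (by simp)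
      have hIio : Finset.Iio (Fin.last (m + 1)) = Finset.univ.map Fin.castSuccEmb := by
        ext i
        simp [Fin.exists_castSucc_eq]
      rw [hIio, Finset.sum_map] at hlast
      have h := (hasSum_shiftedY_contractExponent hα ha hlast hs).mul_left ((-1) ^ (m + 1))
      convert! h using 1
      · funext l; ring
      · ring

theorem summable_norm_shiftedTerm {m : ℕ} {α a : Fin (m + 1) → ℝ} (hα : ∀ i, 0 < α i)
    (ha : ∀ i, 0 ≤ a i) {s : Fin (m + 1) → ℂ}
    (hs : ∀ j : Fin (m + 1), (m : ℝ) + 1 - (j : ℕ) < (∑ i ∈ Finset.Ici j, s i).re)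
    (hlt : ∑ j : Fin m, (α j.succ + a j.succ) < α 0 + a 0) :
    Summable (fun k : Fin m → ℕ => ‖shiftedTerm a α s k‖) := by
  let σ : Fin (m + 1) → ℂ := fun p => -(∑ i ∈ Finset.Ici p, s i) + ((m : ℂ) + 1 - (p : ℕ))
  have hσ : ∀ p, (σ p).re < 0 := fun p => by
    have := hs p
    simp only [σ, Complex.add_re, Complex.neg_re, Complex.sub_re, Complex.natCast_re,
      Complex.one_re]
    linarith
  have hE0 : ∀ k : Fin m → ℕ, shiftedExponent s k 0 = σ 0 - (∑ i, k i : ℕ) := fun k => by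
    simp [shiftedExponent, σ]
  have hE : ∀ (k : Fin m → ℕ) (j : Fin m),
      shiftedExponent s k j.succ = σ j.succ - (∑ i ∈ Finset.Ioi j, k i : ℕ) := fun k j => by
    have : Finset.univ.filter (fun i : Fin m => ((j.succ : Fin (m + 1)) : ℕ) ≤ (i : ℕ)) =
        Finset.Ioi j := by
      ext i
      simp
    simp only [shiftedExponent, σ, this]
    push_cast
    ring
  have hEnorm : ∀ (p : Fin (m + 1)) (K : ℕ), ‖(σ p - K)‖⁻¹ ≤ |(σ p).re|⁻¹ := fun p K => by
    have h0 := hσ p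
    have hK : (0 : ℝ) ≤ K := by positivity
    have h1 : |(σ p).re| ≤ ‖σ p - K‖ := by
      refine le_trans ?_ (Complex.abs_re_le_norm _)
      rw [Complex.sub_re, Complex.natCast_re, abs_of_neg h0, abs_of_neg (by linarith)]
      linarith
    exact inv_anti₀ (abs_pos.2 h0.ne) h1
  obtain ⟨N, hN⟩ := exists_nat_ge (∑ p, ‖σ p‖)
  have hN' : ∀ p, ‖σ p‖ ≤ N := fun p =>
    (Finset.single_le_sum (fun q _ => norm_nonneg (σ q)) (Finset.mem_univ p)).trans hN
  set c : Fin (m + 1) → ℝ := fun i => α i + a i with hc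
  have hcpos : ∀ i, 0 < c i := fun i => add_pos_of_pos_of_nonneg (hα i) (ha i)
  have hsum := summable_negMultinomialTerm N (fun j : Fin m => (hcpos j.succ).le) hlt
  refine Summable.of_nonneg_of_le (fun _ => norm_nonneg _) (fun k => ?_)
    (hsum.mul_left (c 0 ^ ((σ 0).re + N + 1) * |(σ 0).re|⁻¹ * ∏ j : Fin m, |(σ j.succ).re|⁻¹))
  have hfst : ‖((c 0 : ℝ) : ℂ) ^ shiftedExponent s k 0 / shiftedExponent s k 0‖ ≤
      c 0 ^ ((σ 0).re + N + 1) * |(σ 0).re|⁻¹ * (c 0 ^ (N + 1 + ∑ i, k i))⁻¹ := by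
    rw [norm_div, Complex.norm_cpow_eq_rpow_re_of_pos (hcpos 0), hE0, div_eq_mul_inv,
      mul_right_comm]
    refine mul_le_mul (le_of_eq ?_) (hEnorm 0 _) (by positivity)
      (mul_nonneg (Real.rpow_nonneg (hcpos 0).le _) (inv_nonneg.2 (pow_nonneg (hcpos 0).le _)))
    rw [← Real.rpow_natCast, ← Real.rpow_neg (hcpos 0).le, ← Real.rpow_add (hcpos 0),
      Complex.sub_re, Complex.natCast_re]
    congr 1
    push_cast
    ring
  have hprod : ‖∏ j : Fin m, Ring.choose (shiftedExponent s k j.succ) (k j)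
          * ((c j.succ : ℝ) : ℂ) ^ (k j) / shiftedExponent s k j.succ‖ ≤
      (∏ j : Fin m, |(σ j.succ).re|⁻¹) * ∏ j : Fin m,
        ((N + ∑ i ∈ Finset.Ioi j, k i + k j).choose (N + ∑ i ∈ Finset.Ioi j, k i) : ℝ)
          * c j.succ ^ k j := by
    rw [norm_prod, ← Finset.prod_mul_distrib]
    refine Finset.prod_le_prod (fun _ _ => norm_nonneg _) fun j _ => ?_
    rw [norm_div, norm_mul, norm_pow, Complex.norm_real, Real.norm_of_nonneg (hcpos _).le,
      div_eq_mul_inv, mul_comm, hE]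
    have hch := norm_choose_le (N + ∑ i ∈ Finset.Ioi j, k i)
      (z := σ j.succ - (∑ i ∈ Finset.Ioi j, k i : ℕ)) (by
        refine (norm_sub_le _ _).trans ?_
        rw [Complex.norm_natCast, Nat.cast_add]
        linarith [hN' j.succ]) (k j)
    have := pow_nonneg (hcpos j.succ).le (k j)
    exact mul_le_mul (hEnorm j.succ _) (mul_le_mul_of_nonneg_right hch this) (by positivity)
      (by positivity)
  have hnn : 0 ≤ c 0 ^ ((σ 0).re + N + 1) * |(σ 0).re|⁻¹ * (c 0 ^ (N + 1 + ∑ i, k i))⁻¹ :=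
    (norm_nonneg _).trans hfst
  calc ‖shiftedTerm a α s k‖ ≤ _ :=
        (norm_mul _ _).trans_le (mul_le_mul hfst hprod (norm_nonneg _) hnn)
    _ = _ := by
        rw [negMultinomialTerm]
        ring

/-- Here `n = m + 1 ≥ 2`, and the indices `1, …, n` are `0, …, m` in `Fin (m + 1)`. -/
theorem shifted_integral_function_series_expansion
    (m : ℕ) (hm : 1 ≤ m) (α a : Fin (m + 1) → ℝ) (hα : ∀ i, 0 < α i) (ha : ∀ i, 0 ≤ a i)
    (hαa : ∀ i : Fin (m + 1), 0 < (i : ℕ) → α i + a i < ∑ j ∈ Finset.Iio i, (α j + a j))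
    (s : Fin (m + 1) → ℂ)
    (hs : ∀ j : Fin (m + 1), (m : ℝ) + 1 - (j : ℕ) < (∑ i ∈ Finset.Ici j, s i).re) :
    IntegrableOn (shiftedIntegrand a s) (shiftedDomain α) ∧
    (∃ S : ℂ, IteratedHasSum m (shiftedTerm a α s) S ∧
      shiftedY a α s = (-1 : ℂ) ^ (m + 1) * S) ∧
    (∑ j : Fin m, (α j.succ + a j.succ) < α 0 + a 0 →
      Summable (fun k : Fin m → ℕ => ‖shiftedTerm a α s k‖) ∧
      shiftedY a α s = (-1 : ℂ) ^ (m + 1) * ∑' k : Fin m → ℕ, shiftedTerm a α s k) := by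
  have hit := iteratedHasSum_shiftedTerm m hα ha hαa hs
  have hsq : (-1 : ℂ) ^ (m + 1) * (-1) ^ (m + 1) = 1 := by
    rw [← mul_pow]; simp
  refine ⟨integrableOn_shiftedIntegrand m hα ha hs, ⟨_, hit, ?_⟩, fun hlt => ?_⟩
  · rw [← mul_assoc, hsq, one_mul]
  · have hsum := summable_norm_shiftedTerm hα ha hs hlt
    refine ⟨hsum, ?_⟩
    rw [hit.tsum_eq hsum.of_norm, ← mul_assoc, hsq, one_mul]
end
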